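/- Let μ be a positive Radon measure on ℂ satisfying the linear growth condition μ(Q) ≤ C₀ · l(Q) for every square Q, and let Θ > 0. Let C₁, C₁′ be natural numbers, both larger than 1, such that C₁²/C₁′ + 3C₀/C₁ < Θ/2. Then for every square Q with μ(Q) ≥ (Θ/2)·l(Q) there exist two squares Q′ and Q″ contained in Q, each of side length l(Q)/C₁, such that dist(Q′, Q″) ≥ l(Q)/C₁, dist(Q′, Q″) ≤ √2 · l(Q), and min(μ(Q′), μ(Q″)) ≥ l(Q)/C₁′. -/

import Mathlib

open MeasureTheory

/-- The closed axis-parallel square in `ℂ ≅ ℝ²` with center `c` and side length `l`. -/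
def square (c : ℂ) (l : ℝ) : Set ℂ :=
  {w : ℂ | |w.re - c.re| ≤ l / 2 ∧ |w.im - c.im| ≤ l / 2}

/-- The (infimal) Euclidean distance between two subsets of `ℂ`. -/
noncomputable def distSet (s t : Set ℂ) : ℝ := sInf (Set.image2 dist s t)

/-!
Cut `Q` into `n²` congruent squares of side `s = l(Q)/n`. Around any centre `q`, the square of side
`3s` swallows every grid square whose centre is within `s` of `q` in both coordinates. If all other
grid squares were light, `Q` would have mass less than `n²` times the threshold plus the mass of
that `3s`-square. So some heavy grid square has its centre farther than `s` from `q` in one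
coordinate; if `q` is itself a grid centre, integrality of the grid indices improves `s` to `2s`,
and the grid squares around the two centres are at distance at least `s`. Taking first any `q`, and
then as `q` the centre of the heavy square just found, gives the pair.
-/

theorem exists_nat_lt_and_mem_Icc {n : ℕ} (hn : 0 < n) {t : ℝ} (ht : t ∈ Set.Icc (0 : ℝ) n) :
    ∃ i < n, t ∈ Set.Icc (i : ℝ) (i + 1) := by
  rcases ht.1.eq_or_lt with rfl | hpos
  · exact ⟨0, hn, by simp⟩
  · obtain ⟨i, hi⟩ : ∃ i, ⌈t⌉₊ = i + 1 :=
      Nat.exists_eq_add_one.2 (Nat.ceil_pos.2 hpos)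
    have hin : i + 1 ≤ n := hi ▸ Nat.ceil_le.2 ht.2
    have hlt : (i : ℝ) < t := Nat.lt_ceil.1 (hi ▸ i.lt_succ_self)
    have hle : t ≤ i + 1 := by exact_mod_cast hi ▸ Nat.le_ceil t
    exact ⟨i, hin, hlt.le, hle⟩

theorem exists_not_subset_and_le_measure {α ι : Type*} [MeasurableSpace α] {μ : Measure α}
    {S : Finset ι} {A : ι → Set α} {B Q : Set α} {ε : ENNReal} (hQ : Q ⊆ ⋃ i ∈ S, A i)
    (hμ : S.card * ε + μ B < μ Q) : ∃ i ∈ S, ¬ A i ⊆ B ∧ ε ≤ μ (A i) := by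
  classical
  by_contra! light
  let F := S.filter fun i => ¬ A i ⊆ B
  have cover : Q ⊆ (⋃ i ∈ F, A i) ∪ B := by
    intro x hx
    obtain ⟨i, hi, hxi⟩ := Set.mem_iUnion₂.1 (hQ hx)
    by_cases hB : A i ⊆ B
    · exact Or.inr (hB hxi)
    · exact Or.inl (Set.mem_biUnion (Finset.mem_filter.2 ⟨hi, hB⟩) hxi)
  refine hμ.not_ge ?_
  calc μ Q ≤ μ (⋃ i ∈ F, A i) + μ B := (measure_mono cover).trans (measure_union_le _ _)
    _ ≤ ∑ i ∈ F, μ (A i) + μ B := by gcongr; exact measure_biUnion_finset_le _ _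
    _ ≤ ∑ _i ∈ F, ε + μ B := by
      gcongr with i hi
      exact (light i (Finset.mem_filter.1 hi).1 (Finset.mem_filter.1 hi).2).le
    _ = F.card * ε + μ B := by rw [Finset.sum_const, nsmul_eq_mul]
    _ ≤ S.card * ε + μ B := by gcongr; exact Finset.filter_subset _ _

theorem le_distSet {s t : Set ℂ} {d : ℝ} (hs : s.Nonempty) (ht : t.Nonempty)
    (h : ∀ x ∈ s, ∀ y ∈ t, d ≤ dist x y) : d ≤ distSet s t :=
  le_csInf (hs.image2 ht) (Set.forall_mem_image2.2 h)

theorem distSet_le_dist {s t : Set ℂ} {x y : ℂ} (hx : x ∈ s) (hy : y ∈ t) :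
    distSet s t ≤ dist x y :=
  csInf_le ⟨0, Set.forall_mem_image2.2 fun _ _ _ _ => dist_nonneg⟩ (Set.mem_image2_of_mem hx hy)

section Square

variable {c c' : ℂ} {l l' : ℝ}

theorem self_mem_square (hl : 0 ≤ l) : c ∈ square c l := by
  have center_le (x : ℝ) : |x - x| ≤ l / 2 := by
    rw [sub_self, abs_zero]
    positivity
  exact ⟨center_le c.re, center_le c.im⟩

theorem square_subset_square (h : c' ∈ square c (l - l')) : square c' l' ⊆ square c l := by
  rintro w ⟨hre, him⟩
  have tri_re := abs_sub_le w.re c'.re c.re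
  have tri_im := abs_sub_le w.im c'.im c.im
  exact ⟨by linarith [h.1], by linarith [h.2]⟩

theorem dist_le_of_mem_square {w z : ℂ} (hw : w ∈ square c l) (hz : z ∈ square c l) :
    dist w z ≤ Real.sqrt 2 * l := by
  have hre : |w.re - z.re| ≤ l := by
    linarith [abs_sub_le w.re c.re z.re, abs_sub_comm c.re z.re, hw.1, hz.1]
  have him : |w.im - z.im| ≤ l := by
    linarith [abs_sub_le w.im c.im z.im, abs_sub_comm c.im z.im, hw.2, hz.2]
  calc dist w z ≤ Real.sqrt 2 * max |(w - z).re| |(w - z).im| :=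
        Complex.dist_eq w z ▸ Complex.norm_le_sqrt_two_mul_max _
    _ ≤ Real.sqrt 2 * l := by gcongr; exact max_le hre him

theorem le_distSet_square (hl : 0 ≤ l) {d : ℝ}
    (h : l + d ≤ |c.re - c'.re| ∨ l + d ≤ |c.im - c'.im|) :
    d ≤ distSet (square c l) (square c' l) := by
  refine le_distSet ⟨c, self_mem_square hl⟩ ⟨c', self_mem_square hl⟩ fun w hw z hz => ?_
  have coord {a b x y : ℝ} (hab : l + d ≤ |a - b|) (hx : |x - a| ≤ l / 2)
      (hy : |y - b| ≤ l / 2) : d ≤ |x - y| := by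
    linarith [abs_sub_le a x b, abs_sub_le x y b, abs_sub_comm a x]
  rw [Complex.dist_eq]
  rcases h with hre | him
  · exact (coord hre hw.1 hz.1).trans (Complex.abs_re_le_norm (w - z))
  · exact (coord him hw.2 hz.2).trans (Complex.abs_im_le_norm (w - z))

theorem distSet_square_le (hl' : 0 ≤ l') {c'' : ℂ} (h' : square c' l' ⊆ square c l)
    (h'' : square c'' l' ⊆ square c l) :
    distSet (square c' l') (square c'' l') ≤ Real.sqrt 2 * l :=
  (distSet_le_dist (self_mem_square hl') (self_mem_square hl')).trans
    (dist_le_of_mem_square (h' (self_mem_square hl')) (h'' (self_mem_square hl')))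

end Square

section Cells

variable {a l x y : ℝ} {n : ℕ}

/-- The centres of the `n` congruent cells into which the interval `[a - l/2, a + l/2]`, given like
`square` by its centre and length, is subdivided. -/
noncomputable def cellCenters (a l : ℝ) (n : ℕ) : Finset ℝ :=
  (Finset.range n).image fun i : ℕ => a - l / 2 + (i + 1 / 2) * (l / n)

theorem mem_cellCenters :
    x ∈ cellCenters a l n ↔ ∃ i < n, a - l / 2 + (i + 1 / 2) * (l / n) = x := by
  simp only [cellCenters, Finset.mem_image, Finset.mem_range]

theorem card_cellCenters_le : (cellCenters a l n).card ≤ n :=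
  Finset.card_image_le.trans_eq (Finset.card_range n)

theorem abs_sub_le_of_mem_cellCenters (hl : 0 ≤ l) (hx : x ∈ cellCenters a l n) :
    |x - a| ≤ (l - l / n) / 2 := by
  obtain ⟨i, hi, rfl⟩ := mem_cellCenters.1 hx
  have hn : (n : ℝ) ≠ 0 := Nat.cast_ne_zero.2 (Nat.ne_zero_of_lt hi)
  have hs : 0 ≤ l / n := by positivity
  have hns : n * (l / n) = l := mul_div_cancel₀ l hn
  have lower : 0 ≤ i * (l / n) := mul_nonneg i.cast_nonneg hs
  have upper : ((i : ℝ) + 1) * (l / n) ≤ n * (l / n) :=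
    mul_le_mul_of_nonneg_right (by exact_mod_cast hi) hs
  rw [abs_le]
  constructor <;> linarith

theorem exists_mem_cellCenters_abs_sub_le (hl : 0 < l) (hn : 0 < n) (hx : |x - a| ≤ l / 2) :
    ∃ y ∈ cellCenters a l n, |x - y| ≤ l / n / 2 := by
  have hs : 0 < l / n := by positivity
  have hns : n * (l / n) = l := mul_div_cancel₀ l (by positivity)
  obtain ⟨hxl, hxr⟩ := abs_le.1 hx
  obtain ⟨i, hi, hil, hir⟩ := exists_nat_lt_and_mem_Icc hn (t := (x - (a - l / 2)) / (l / n))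
    ⟨div_nonneg (by linarith) hs.le, (div_le_iff₀ hs).2 (by linarith)⟩
  rw [le_div_iff₀ hs] at hil
  rw [div_le_iff₀ hs] at hir
  refine ⟨_, mem_cellCenters.2 ⟨i, hi, rfl⟩, abs_le.2 ⟨?_, ?_⟩⟩ <;> linarith

theorem two_mul_le_abs_sub_of_mem_cellCenters (hl : 0 ≤ l) (hx : x ∈ cellCenters a l n)
    (hy : y ∈ cellCenters a l n) (hxy : l / n < |x - y|) : 2 * (l / n) ≤ |x - y| := by
  obtain ⟨i, -, rfl⟩ := mem_cellCenters.1 hx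
  obtain ⟨j, -, rfl⟩ := mem_cellCenters.1 hy
  have hs : 0 ≤ l / n := by positivity
  have diff : |a - l / 2 + (i + 1 / 2) * (l / n) - (a - l / 2 + (j + 1 / 2) * (l / n))| =
      ((|(i : ℤ) - j| : ℤ) : ℝ) * (l / n) := by
    push_cast
    rw [← abs_of_nonneg hs, ← abs_mul, abs_of_nonneg hs]
    ring_nf
  rw [diff] at hxy ⊢
  have one_lt : 1 < |(i : ℤ) - j| := by
    exact_mod_cast lt_of_mul_lt_mul_right ((one_mul (l / (n : ℝ))).trans_lt hxy) hs
  gcongr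
  exact_mod_cast one_lt

end Cells

section Grid

variable {c p q : ℂ} {l : ℝ} {n : ℕ}

/-- The centres of the `n²` congruent squares of side `l / n` into which `square c l` is
subdivided. -/
noncomputable def gridCenters (c : ℂ) (l : ℝ) (n : ℕ) : Finset ℂ :=
  Finset.image₂ Complex.mk (cellCenters c.re l n) (cellCenters c.im l n)

theorem mem_gridCenters :
    p ∈ gridCenters c l n ↔ p.re ∈ cellCenters c.re l n ∧ p.im ∈ cellCenters c.im l n := by
  simp only [gridCenters, Finset.mem_image₂]
  exact ⟨by rintro ⟨x, hx, y, hy, rfl⟩; exact ⟨hx, hy⟩, fun h => ⟨_, h.1, _, h.2, rfl⟩⟩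

theorem card_gridCenters_le : (gridCenters c l n).card ≤ n ^ 2 :=
  (Finset.card_image₂_le _ _ _).trans <|
    (Nat.mul_le_mul card_cellCenters_le card_cellCenters_le).trans_eq (sq n).symm

theorem square_subset_of_mem_gridCenters (hl : 0 ≤ l) (hp : p ∈ gridCenters c l n) :
    square p (l / n) ⊆ square c l :=
  square_subset_square ⟨abs_sub_le_of_mem_cellCenters hl (mem_gridCenters.1 hp).1,
    abs_sub_le_of_mem_cellCenters hl (mem_gridCenters.1 hp).2⟩

theorem square_subset_biUnion_gridCenters (hl : 0 < l) (hn : 0 < n) :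
    square c l ⊆ ⋃ p ∈ gridCenters c l n, square p (l / n) := by
  rintro w ⟨hre, him⟩
  obtain ⟨x, hx, hwx⟩ := exists_mem_cellCenters_abs_sub_le hl hn hre
  obtain ⟨y, hy, hwy⟩ := exists_mem_cellCenters_abs_sub_le hl hn him
  exact Set.mem_biUnion (x := (⟨x, y⟩ : ℂ)) (mem_gridCenters.2 ⟨hx, hy⟩) ⟨hwx, hwy⟩

theorem le_distSet_square_of_mem_gridCenters (hl : 0 ≤ l) (hp : p ∈ gridCenters c l n)
    (hq : q ∈ gridCenters c l n) (hpq : ¬ square p (l / n) ⊆ square q (3 * (l / n))) :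
    l / n ≤ distSet (square p (l / n)) (square q (l / n)) := by
  have hs : 0 ≤ l / n := by positivity
  have far : l / n < |p.re - q.re| ∨ l / n < |p.im - q.im| := by
    by_contra! near
    exact hpq (square_subset_square ⟨by linarith [near.1], by linarith [near.2]⟩)
  rw [mem_gridCenters] at hp hq
  refine le_distSet_square hs ?_
  rw [← two_mul]
  exact far.imp (two_mul_le_abs_sub_of_mem_cellCenters hl hp.1 hq.1)
    (two_mul_le_abs_sub_of_mem_cellCenters hl hp.2 hq.2)

end Grid

theorem stmt7_general (μ : Measure ℂ) {c : ℂ} {l : ℝ} (hl : 0 < l) {n : ℕ} (hn : 0 < n)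
    {ε M : ENNReal} (hM : ∀ q, μ (square q (3 * (l / n))) ≤ M)
    (hμ : n ^ 2 * ε + M < μ (square c l)) :
    ∃ c' c'' : ℂ,
      square c' (l / n) ⊆ square c l ∧
      square c'' (l / n) ⊆ square c l ∧
      l / n ≤ distSet (square c' (l / n)) (square c'' (l / n)) ∧
      distSet (square c' (l / n)) (square c'' (l / n)) ≤ Real.sqrt 2 * l ∧
      ε ≤ min (μ (square c' (l / n))) (μ (square c'' (l / n))) := by
  have heavy (q : ℂ) : ∃ p ∈ gridCenters c l n,
      ¬ square p (l / n) ⊆ square q (3 * (l / n)) ∧ ε ≤ μ (square p (l / n)) := by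
    refine exists_not_subset_and_le_measure (square_subset_biUnion_gridCenters hl hn)
      (lt_of_le_of_lt ?_ hμ)
    gcongr
    · exact_mod_cast card_gridCenters_le
    · exact hM q
  obtain ⟨q, hq, -, hμq⟩ := heavy c
  obtain ⟨p, hp, hpq, hμp⟩ := heavy q
  have hpQ := square_subset_of_mem_gridCenters hl.le hp
  have hqQ := square_subset_of_mem_gridCenters hl.le hq
  exact ⟨p, q, hpQ, hqQ, le_distSet_square_of_mem_gridCenters hl.le hp hq hpq,
    distSet_square_le (by positivity) hpQ hqQ, le_min hμp hμq⟩

theorem sq_mul_ofReal_add_ofReal_lt {C₀ l m θ : ℝ} {n : ℕ} (hC₀ : 0 ≤ C₀) (hl : 0 < l)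
    (hm : 0 ≤ m) (h : (n : ℝ) ^ 2 / m + 3 * C₀ / n < θ) :
    n ^ 2 * ENNReal.ofReal (l / m) + ENNReal.ofReal (C₀ * (3 * (l / n))) <
      ENNReal.ofReal (θ * l) := by
  have factor : (n : ℝ) ^ 2 * (l / m) + C₀ * (3 * (l / n)) =
      ((n : ℝ) ^ 2 / m + 3 * C₀ / n) * l := by ring
  rw [← ENNReal.ofReal_natCast n, ← ENNReal.ofReal_pow n.cast_nonneg,
    ← ENNReal.ofReal_mul (by positivity), ← ENNReal.ofReal_add (by positivity) (by positivity),
    factor]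
  exact (ENNReal.ofReal_lt_ofReal_iff_of_nonneg (by positivity)).2 (by gcongr)

/-- If `μ` has linear growth with constant `C₀` and `C₁, C₁′ ∈ ℕ`, both `> 1`, satisfy
`C₁²/C₁′ + 3C₀/C₁ < Θ/2`, then every square `Q` with `μ(Q) ≥ (Θ/2)·l(Q)` contains two
squares `Q′, Q″` of side length `l(Q)/C₁` with `l(Q)/C₁ ≤ dist(Q′,Q″) ≤ √2·l(Q)` and
`min(μ(Q′), μ(Q″)) ≥ l(Q)/C₁′`. -/
theorem stmt7 (μ : Measure ℂ) [IsLocallyFiniteMeasure μ] (C₀ Θ : ℝ) (hC₀ : 0 < C₀)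
    (hΘ : 0 < Θ)
    (growth : ∀ (c : ℂ) (l : ℝ), 0 < l → μ (square c l) ≤ ENNReal.ofReal (C₀ * l))
    (C₁ C₁' : ℕ) (hC₁ : 1 < C₁) (hC₁' : 1 < C₁')
    (hsmall : (C₁ : ℝ) ^ 2 / (C₁' : ℝ) + 3 * C₀ / (C₁ : ℝ) < Θ / 2) :
    ∀ (c : ℂ) (l : ℝ), 0 < l → ENNReal.ofReal (Θ / 2 * l) ≤ μ (square c l) →
      ∃ c' c'' : ℂ,
        square c' (l / C₁) ⊆ square c l ∧
        square c'' (l / C₁) ⊆ square c l ∧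
        l / C₁ ≤ distSet (square c' (l / C₁)) (square c'' (l / C₁)) ∧
        distSet (square c' (l / C₁)) (square c'' (l / C₁)) ≤ Real.sqrt 2 * l ∧
        ENNReal.ofReal (l / C₁') ≤
          min (μ (square c' (l / C₁))) (μ (square c'' (l / C₁))) := by
  intro c l hl hQ
  exact stmt7_general μ hl (by positivity) (fun q => growth q _ (by positivity))
    ((sq_mul_ofReal_add_ofReal_lt hC₀.le hl C₁'.cast_nonneg hsmall).trans_le hQ)
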